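/- arXiv:2004.10521 — 3 statements merged into one kernel-verified Lean document; each statement's English description precedes it below -/
import Mathlib

section
/- Let H be a finite undirected simple graph and let A and Y be distinct non-adjacent vertices of H. Then ∂_H(cc(nb_H(Y), A, H)) = { v ∈ nb_H(Y) : there exists a path in H from A to v whose only vertex belonging to nb_H(Y) is v }. -/
open Relation Set

namespace CausalGraph

variable {V : Type*} [Fintype V] [DecidableEq V]

/-- `p` is a path in the undirected sense from `u` to `v` along adjacency `Adj`:
a nonempty list of pairwise distinct vertices, consecutive ones adjacent,
starting at `u` and ending at `v`. -/
def IsPath (Adj : V → V → Prop) (u v : V) (p : List V) : Prop :=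
  List.Chain' Adj p ∧ p.head? = some u ∧ p.getLast? = some v ∧ p.Nodup

/-- Ancestors of `S` in the digraph `D` (every vertex is an ancestor of itself). -/
def anc (D : V → V → Prop) (S : Set V) : Set V :=
  {u | ∃ v ∈ S, Relation.ReflTransGen D u v}

/-- Descendants of `S` in the digraph `D` (every vertex is a descendant of itself). -/
def desc (D : V → V → Prop) (S : Set V) : Set V :=
  {u | ∃ v ∈ S, Relation.ReflTransGen D v u}

/-- Parents of vertices of `S` in the digraph `D`. -/
def parents (D : V → V → Prop) (S : Set V) : Set V :=
  {u | ∃ v ∈ S, D u v}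

/-- The digraph `D` is acyclic. -/
def Acyclic (D : V → V → Prop) : Prop :=
  ∀ u v, D u v → ¬ Relation.ReflTransGen D v u

/-- Vertices other than `A` lying on a directed path from `A` to `Y`. -/
def cn (D : V → V → Prop) (A Y : V) : Set V :=
  {v | v ≠ A ∧ Relation.ReflTransGen D A v ∧ Relation.ReflTransGen D v Y}

/-- The forbidden set. -/
def forb (D : V → V → Prop) (A Y : V) : Set V :=
  desc D (cn D A Y) ∪ {A}

/-- Proper back-door graph: delete every edge from `A` into `cn D A Y`. -/
def pbd (D : V → V → Prop) (A Y : V) : V → V → Prop :=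
  fun u v => D u v ∧ ¬(u = A ∧ v ∈ cn D A Y)

/-- `y` is an interior vertex of the list `p` with neighbours `x` and `z` on the path. -/
def InteriorAt (p : List V) (x y z : V) : Prop :=
  ∃ s t : List V, p = s ++ x :: y :: z :: t

/-- The path `p` is blocked by `Z` in the digraph `D`: some interior non-collider
lies in `Z`, or some interior collider has no descendant in `Z`. -/
def Blocked (D : V → V → Prop) (Z : Set V) (p : List V) : Prop :=
  (∃ x y z, InteriorAt p x y z ∧ ¬(D x y ∧ D z y) ∧ y ∈ Z) ∨
  (∃ x y z, InteriorAt p x y z ∧ (D x y ∧ D z y) ∧ ∀ d ∈ desc D {y}, d ∉ Z)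

/-- d-separation of `S` and `T` given `Z` in the digraph `D`. -/
def DSep (D : V → V → Prop) (S T Z : Set V) : Prop :=
  ∀ s ∈ S, ∀ t ∈ T, ∀ p : List V,
    IsPath (fun a b => D a b ∨ D b a) s t p → Blocked D Z p

/-- Moral graph of the subgraph of the digraph `D` induced on `Vs`. -/
def moral (D : V → V → Prop) (Vs : Set V) : SimpleGraph V :=
  SimpleGraph.fromRel (fun u v =>
    u ∈ Vs ∧ v ∈ Vs ∧ (D u v ∨ D v u ∨ ∃ w ∈ Vs, D u w ∧ D v w))

/-- Separation in an undirected graph: every path from `S` to `T` meets `W`. -/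
def USep (H : SimpleGraph V) (S T W : Set V) : Prop :=
  ∀ s ∈ S, ∀ t ∈ T, ∀ p : List V, IsPath H.Adj s t p → ∃ z ∈ W, z ∈ p

/-- `Z` is an `A`–`Y` cut in an undirected graph `H` with vertex set `Vs`. -/
def IsCut (Vs : Set V) (H : SimpleGraph V) (A Y : V) (Z : Set V) : Prop :=
  Z ⊆ Vs ∧ Z ∩ {A, Y} = ∅ ∧ ∀ p : List V, IsPath H.Adj A Y p → ∃ z ∈ Z, z ∈ p

def MinimalCut (Vs : Set V) (H : SimpleGraph V) (A Y : V) (Z : Set V) : Prop :=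
  IsCut Vs H A Y Z ∧ ∀ Z' ⊂ Z, ¬ IsCut Vs H A Y Z'

def MinimumCut (Vs : Set V) (H : SimpleGraph V) (A Y : V) (Z : Set V) : Prop :=
  IsCut Vs H A Y Z ∧ ∀ Z', IsCut Vs H A Y Z' → Z.ncard ≤ Z'.ncard

/-- Connected component of `y` in `H` restricted to the complement of `U`:
vertices reachable from `y` by paths avoiding `U`. -/
def cc (H : SimpleGraph V) (U : Set V) (y : V) : Set V :=
  {w | ∃ p : List V, IsPath H.Adj y w p ∧ ∀ x ∈ p, x ∉ U}

/-- Boundary of `S` in `H`: vertices outside `S` adjacent to some vertex of `S`. -/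
def bdry (H : SimpleGraph V) (S : Set V) : Set V :=
  {v | v ∉ S ∧ ∃ u ∈ S, H.Adj v u}

/-- The partial order `Z₁ ⊴_H Z₂` between `A`–`Y` cuts. -/
def TLE (H : SimpleGraph V) (A Y : V) (Z₁ Z₂ : Set V) : Prop :=
  USep H {Y} (Z₂ \ Z₁) Z₁ ∧ USep H {A} (Z₁ \ Z₂) Z₂

/-- Ancestors of `{A, Y} ∪ L`. -/
def ancAYL (D : V → V → Prop) (A Y : V) (L : Set V) : Set V :=
  anc D ({A, Y} ∪ L)

/-- The moral graph `H⁰` of the proper back-door graph induced on `an_G({A,Y} ∪ L)`. -/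
def H0 (D : V → V → Prop) (A Y : V) (L : Set V) : SimpleGraph V :=
  moral (pbd D A Y) (ancAYL D A Y L)

/-- The set of vertices removed from `H⁰` when constructing `H¹`. -/
def Ignore (D : V → V → Prop) (A Y : V) (L N : Set V) : Set V :=
  (ancAYL D A Y L \ {A, Y}) ∩ ((Set.univ \ N) ∪ forb D A Y)

/-- Vertex set of `H¹`. -/
def H1verts (D : V → V → Prop) (A Y : V) (L N : Set V) : Set V :=
  ancAYL D A Y L \ Ignore D A Y L N

/-- The non-parametric adjustment efficiency graph `H¹`: delete the vertices of
`Ignore`, join two remaining vertices if they are joined in `H⁰` by a path all of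
whose intermediate vertices are in `Ignore`, and join `A` and `Y` to every vertex
of `L`. -/
def H1 (D : V → V → Prop) (A Y : V) (L N : Set V) : SimpleGraph V :=
  SimpleGraph.fromRel (fun u v =>
    u ∈ H1verts D A Y L N ∧ v ∈ H1verts D A Y L N ∧
      ((∃ p : List V, IsPath (H0 D A Y L).Adj u v p ∧
          ∀ x ∈ p, x ≠ u → x ≠ v → x ∈ Ignore D A Y L N) ∨
        (u = A ∧ v ∈ L) ∨ (u = Y ∧ v ∈ L)))

/-- The graphical adjustment criterion for `A, Y, L, N` in the DAG `D`. -/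
def GAC (D : V → V → Prop) (A Y : V) (L N Z : Set V) : Prop :=
  DSep (pbd D A Y) {A} {Y} Z ∧ Z ∩ forb D A Y = ∅ ∧ L ⊆ Z ∧ Z ⊆ N

def MinimalGAC (D : V → V → Prop) (A Y : V) (L N Z : Set V) : Prop :=
  GAC D A Y L N Z ∧ ∀ Z' ⊂ Z, ¬ GAC D A Y L N Z'

def MinimumGAC (D : V → V → Prop) (A Y : V) (L N Z : Set V) : Prop :=
  GAC D A Y L N Z ∧ ∀ Z', GAC D A Y L N Z' → Z.ncard ≤ Z'.ncard

/-- Graphical admissibility of the pair `(L, N)`. -/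
def Admissible (D : V → V → Prop) (A Y : V) (L N : Set V) : Prop :=
  ∃ Z, GAC D A Y L N Z

end CausalGraph

namespace CausalGraph

section Paths

variable {V : Type*} {Adj : V → V → Prop} {u v w : V} {p s t : List V}

theorem IsPath.concat (hp : IsPath Adj u v p) (hvw : Adj v w) (hw : w ∉ p) :
    IsPath Adj u w (p ++ [w]) := by
  obtain ⟨hchain, hhead, hlast, hnodup⟩ := hp
  refine ⟨hchain.append (.singleton w) ?_, by simp [hhead], by simp, ?_⟩
  · simpa [hlast] using hvw
  · simpa using hnodup.concat hw

theorem IsPath.of_append_cons (hp : IsPath Adj u v (s ++ w :: t)) : IsPath Adj u w (s ++ [w]) := by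
  obtain ⟨hchain, hhead, -, hnodup⟩ := hp
  have hprefix : s ++ [w] <+: s ++ w :: t := ⟨t, by simp⟩
  exact ⟨hchain.prefix hprefix, by cases s <;> simpa using hhead, by simp,
    hnodup.sublist hprefix.sublist⟩

theorem IsPath.exists_eq_concat (hp : IsPath Adj u v p) (huv : u ≠ v) :
    ∃ q w, p = q ++ [v] ∧ v ∉ q ∧ IsPath Adj u w q ∧ Adj w v := by
  obtain ⟨hchain, hhead, hlast, hnodup⟩ := id hp
  obtain ⟨q, rfl⟩ := List.getLast?_eq_some_iff.1 hlast
  obtain rfl | ⟨r, w, rfl⟩ := q.eq_nil_or_concat'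
  · exact absurd (by simpa using hhead.symm) huv
  · simp only [List.append_assoc, List.singleton_append] at hp
    refine ⟨r ++ [w], w, rfl, ?_, hp.of_append_cons, ?_⟩
    · exact fun hv => List.disjoint_of_nodup_append hnodup hv (List.mem_singleton_self v)
    · exact (List.isChain_append.1 hchain).2.2 w (by simp) v (by simp)

end Paths

section Components

variable {V : Type*} {H : SimpleGraph V} {U : Set V} {a u v : V}

theorem notMem_of_mem_cc (hv : v ∈ cc H U a) : v ∉ U := by
  obtain ⟨p, ⟨-, -, hlast, -⟩, hpU⟩ := hv
  exact hpU v (List.mem_of_getLast? hlast)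

theorem IsPath.mem_cc {p : List V} (hp : IsPath H.Adj a u p) (hpU : ∀ x ∈ p, x ∉ U)
    (hv : v ∈ p) : v ∈ cc H U a := by
  obtain ⟨s, t, rfl⟩ := List.append_of_mem hv
  exact ⟨s ++ [v], hp.of_append_cons, fun x hx => hpU x (by grind)⟩

theorem mem_cc_of_adj (hu : u ∈ cc H U a) (huv : H.Adj u v) (hv : v ∉ U) : v ∈ cc H U a := by
  obtain ⟨p, hp, hpU⟩ := hu
  by_cases hvp : v ∈ p
  · exact hp.mem_cc hpU hvp
  · exact ⟨p ++ [v], hp.concat huv hvp, by grind⟩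

theorem bdry_cc_subset : bdry H (cc H U a) ⊆ U := by
  rintro v ⟨hv, u, hu, hvu⟩
  by_contra hvU
  exact hv (mem_cc_of_adj hu hvu.symm hvU)

end Components

theorem stmt15_general {V : Type*} (H : SimpleGraph V) (U : Set V) (A : V) (hA : A ∉ U) :
    bdry H (cc H U A)
      = {v | v ∈ U ∧ ∃ p : List V, IsPath H.Adj A v p ∧ ∀ x ∈ p, x ∈ U → x = v} := by
  ext v
  constructor
  · intro hv
    obtain ⟨hvcc, u, ⟨p, hp, hpU⟩, hvu⟩ := id hv
    have hvp : v ∉ p := fun hvp => hvcc (hp.mem_cc hpU hvp)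
    exact ⟨bdry_cc_subset hv, p ++ [v], hp.concat hvu.symm hvp, by grind⟩
  · rintro ⟨hvU, p, hp, hpU⟩
    have hAv : A ≠ v := (ne_of_mem_of_not_mem hvU hA).symm
    obtain ⟨q, u, rfl, hvq, hq, huv⟩ := hp.exists_eq_concat hAv
    have hqU : ∀ x ∈ q, x ∉ U := fun x hx hxU =>
      hvq (hpU x (List.mem_append_left _ hx) hxU ▸ hx)
    exact ⟨fun hvcc => notMem_of_mem_cc hvcc hvU, u, ⟨q, hq, hqU⟩, huv.symm⟩

/-- `∂_H(cc(nb_H(Y), A, H))` equals the set of neighbours `v` of `Y`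
for which some path in `H` from `A` to `v` meets `nb_H(Y)` only at `v`. -/
theorem stmt15 {V : Type*} [Fintype V] [DecidableEq V]
    (H : SimpleGraph V) (A Y : V)
    (hAY : A ≠ Y) (hnadj : ¬ H.Adj A Y) :
    bdry H (cc H (H.neighborSet Y) A)
      = {v | v ∈ H.neighborSet Y ∧
          ∃ p : List V, IsPath H.Adj A v p ∧ ∀ x ∈ p, x ∈ H.neighborSet Y → x = v} := by
  exact stmt15_general H (H.neighborSet Y) A fun hYA => hnadj hYA.symm

end CausalGraph
end

section
/- Let H be a finite undirected simple graph and let A and Y be distinct non-adjacent vertices of H. Then nb_H(Y) is an A–Y cut in H, and for every A–Y cut Z in H one has nb_H(Y) ⊴_H Z, i.e., Y ⊥_H Z\nb_H(Y) | nb_H(Y) and A ⊥_H nb_H(Y)\Z | Z. -/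
open Relation Set

namespace CausalGraph

/-!
Any path leaving `Y` passes through a neighbour of `Y` at its first step; this gives the cut
property and the separation on the side of `Y`. For the side of `A`, extend a path from `A` to a
neighbour of `Y` by the edge into `Y`: the result is a walk from `A` to `Y`, so it meets `Z`, and
not at `Y`. Separation may be tested on walks instead of paths, so the extension need not be a path.
-/

section Separation

variable {V : Type*} {H : SimpleGraph V} {S T T' W Z Vs : Set V} {u v y A Y : V}

theorem isPath_adj_iff_exists_walk {p : List V} :
    IsPath H.Adj u v p ↔ ∃ w : H.Walk u v, w.IsPath ∧ w.support = p := by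
  constructor
  · rintro ⟨hchain, hhead, hlast, hnodup⟩
    have hne : p ≠ [] := List.ne_nil_of_mem (List.mem_of_mem_head? hhead)
    obtain rfl : p.head hne = u := List.head_of_head?_eq_some hhead
    obtain rfl : p.getLast hne = v := List.getLast_of_getLast?_eq_some hlast
    have hsupport := SimpleGraph.Walk.support_ofSupport hne hchain
    exact ⟨.ofSupport p hne hchain, .mk' (hsupport.symm ▸ hnodup), hsupport⟩
  · rintro ⟨w, hw, rfl⟩
    refine ⟨w.isChain_adj_support, ?_, ?_, hw.support_nodup⟩
    · rw [List.head?_eq_some_head w.support_ne_nil, w.head_support]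
    · rw [List.getLast?_eq_some_getLast w.support_ne_nil, w.getLast_support]

theorem uSep_iff_forall_walk :
    USep H S T W ↔ ∀ s ∈ S, ∀ t ∈ T, ∀ w : H.Walk s t, ∃ z ∈ W, z ∈ w.support := by
  classical
  constructor
  · intro h s hs t ht w
    obtain ⟨z, hzW, hz⟩ :=
      h s hs t ht _ (isPath_adj_iff_exists_walk.mpr ⟨w.bypass, w.bypass_isPath, rfl⟩)
    exact ⟨z, hzW, w.support_bypass_subset_support hz⟩
  · intro h s hs t ht p hp
    obtain ⟨w, -, rfl⟩ := isPath_adj_iff_exists_walk.mp hp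
    exact h s hs t ht w

theorem USep.symm (h : USep H S T W) : USep H T S W := by
  rw [uSep_iff_forall_walk] at h ⊢
  intro t ht s hs w
  simpa only [SimpleGraph.Walk.support_reverse, List.mem_reverse] using h s hs t ht w.reverse

theorem USep.mono_right (h : USep H S T W) (hT : T' ⊆ T) : USep H S T' W :=
  fun s hs t ht => h s hs t (hT ht)

theorem uSep_neighborSet_of_notMem (hy : y ∉ T) : USep H {y} T (H.neighborSet y) := by
  rw [uSep_iff_forall_walk]
  rintro _ rfl t ht w
  have hw : ¬ w.Nil := SimpleGraph.Walk.not_nil_of_ne (ne_of_mem_of_not_mem ht hy).symm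
  exact ⟨w.snd, w.adj_snd hw, w.getVert_mem_support 1⟩

theorem USep.neighborSet_right (h : USep H S {y} W) (hy : y ∉ W) :
    USep H S (H.neighborSet y) W := by
  rw [uSep_iff_forall_walk] at h ⊢
  intro s hs t ht w
  obtain ⟨z, hzW, hz⟩ := h s hs y rfl (w.concat (H.adj_symm ht))
  rw [SimpleGraph.Walk.support_concat, List.mem_append, List.mem_singleton] at hz
  exact ⟨z, hzW, hz.resolve_right (ne_of_mem_of_not_mem hzW hy)⟩

theorem isCut_iff_uSep :
    IsCut Vs H A Y Z ↔ Z ⊆ Vs ∧ A ∉ Z ∧ Y ∉ Z ∧ USep H {A} {Y} Z := by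
  simp only [IsCut, USep, ← disjoint_iff_inter_eq_empty, disjoint_insert_right,
    disjoint_singleton_right, mem_singleton_iff, forall_eq, and_assoc]

theorem isCut_neighborSet (hVs : H.neighborSet Y ⊆ Vs) (hAY : A ≠ Y) (hnadj : ¬ H.Adj A Y) :
    IsCut Vs H A Y (H.neighborSet Y) :=
  isCut_iff_uSep.mpr ⟨hVs, fun h => hnadj h.symm, H.irrefl,
    (uSep_neighborSet_of_notMem (mem_singleton_iff.not.mpr hAY.symm)).symm⟩

theorem IsCut.neighborSet_tle (hZ : IsCut Vs H A Y Z) : TLE H A Y (H.neighborSet Y) Z := by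
  obtain ⟨-, -, hYZ, hsep⟩ := isCut_iff_uSep.mp hZ
  exact ⟨uSep_neighborSet_of_notMem fun h => hYZ h.1,
    (hsep.neighborSet_right hYZ).mono_right sdiff_subset⟩

end Separation

theorem stmt16_general {V : Type*} (H : SimpleGraph V) (A Y : V)
    (hAY : A ≠ Y) (hnadj : ¬ H.Adj A Y) :
    IsCut Set.univ H A Y (H.neighborSet Y) ∧
    ∀ Z, IsCut Set.univ H A Y Z → TLE H A Y (H.neighborSet Y) Z :=
  ⟨isCut_neighborSet (subset_univ _) hAY hnadj, fun _ hZ => hZ.neighborSet_tle⟩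

/-- `nb_H(Y)` is an `A`–`Y` cut in `H` and `nb_H(Y) ⊴_H Z` for every
`A`–`Y` cut `Z` in `H`. -/
theorem stmt16 {V : Type*} [Fintype V] [DecidableEq V]
    (H : SimpleGraph V) (A Y : V)
    (hAY : A ≠ Y) (hnadj : ¬ H.Adj A Y) :
    IsCut Set.univ H A Y (H.neighborSet Y) ∧
    ∀ Z, IsCut Set.univ H A Y Z → TLE H A Y (H.neighborSet Y) Z :=
  stmt16_general H A Y hAY hnadj

end CausalGraph
end

section
/- Let 𝔅 ⊆ 𝔊 ⊆ ℱ be sub-σ-algebras, suppose each π_a is 𝔅-measurable, and suppose there is ε > 0 with f_a^𝔊 ≥ ε almost surely for every a ∈ 𝒜. Suppose further that f_a^𝔊 = f_a^𝔅 almost surely for every a ∈ 𝒜 (this holds in particular when A is conditionally independent of 𝔊 given 𝔅). For a ∈ 𝒜 set S_a := (1_{A=a}/f_a^𝔊 − 1) · π_a · (b_a^𝔊 − b_a^𝔅). Then Var(ψ^𝔅) − Var(ψ^𝔊) = Var(Σ_{a∈𝒜} S_a) ≥ 0. -/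
/-!
Since `𝔅` and `𝔊` give the same propensities `f_a`, the functions `ψ^𝔅` and `ψ^𝔊` are, up to an
additive constant, the same augmented inverse-probability-weighted score, evaluated at the outcome
models `b^𝔅` and `b^𝔊`. For a fixed `f` this score is affine in the outcome model `g`, and passing
from `b^𝔊` to `g` adds `∑ a, (1_{A=a} / f_a - 1) π_a (b_a^𝔊 - g_a)`, whose conditional expectation
given `𝔊` is zero. This term is uncorrelated with the score at `b^𝔊`: the score is the sum of a
`𝔊`-measurable function and multiples of the residuals `1_{A=a} (Y - b_a^𝔊)`, and on `{A = a}`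
the added term is itself a `𝔊`-measurable function, so it can be taken out of
`E[1_{A=a} (Y - b_a^𝔊) | 𝔊] = 0`. The variances therefore add.
-/

open MeasureTheory ProbabilityTheory

namespace CausalVar

variable {Ω : Type*} {α : Type*} [DecidableEq α]

/-- `f_a^m`: the conditional probability of the event `A = a` given the
sub-σ-algebra `m`, i.e. `E[1_{A=a} | m]`. -/
noncomputable def fA [mΩ : MeasurableSpace Ω] (P : Measure Ω) (m : MeasurableSpace Ω)
    (A : Ω → α) (a : α) : Ω → ℝ :=
  P[fun ω => if A ω = a then (1 : ℝ) else 0 | m]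

/-- `b_a^m = E[1_{A=a} Y | m] / f_a^m`, a version of `E[Y | A = a, m]`. -/
noncomputable def bA [mΩ : MeasurableSpace Ω] (P : Measure Ω) (m : MeasurableSpace Ω)
    (A : Ω → α) (Y : Ω → ℝ) (a : α) : Ω → ℝ :=
  fun ω => (P[fun ω' => if A ω' = a then Y ω' else 0 | m]) ω
      / fA (mΩ := mΩ) P m A a ω

/-- The influence function `ψ^m` of the adjusted functional. -/
noncomputable def ψ [mΩ : MeasurableSpace Ω] (P : Measure Ω) (m : MeasurableSpace Ω)
    [Fintype α] (A : Ω → α) (Y : Ω → ℝ) (π : α → Ω → ℝ) : Ω → ℝ :=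
  fun ω => ∑ a : α,
    ((if A ω = a then (1 : ℝ) else 0) * π a ω / fA (mΩ := mΩ) P m A a ω
        * (Y ω - bA (mΩ := mΩ) P m A Y a ω)
      + π a ω * bA (mΩ := mΩ) P m A Y a ω
      - ∫ ω', π a ω' * bA (mΩ := mΩ) P m A Y a ω' ∂P)

section CondExp

variable {m mΩ : MeasurableSpace Ω} {P : Measure Ω}

theorem integral_eq_zero_of_condExp_eq_zero (hm : m ≤ mΩ) [SigmaFinite (P.trim hm)] {f : Ω → ℝ}
    (hf : P[f | m] =ᵐ[P] 0) : ∫ ω, f ω ∂P = 0 := by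
  rw [← integral_condExp hm, integral_congr_ae hf]
  exact integral_zero ..

theorem integral_mul_eq_zero_of_condExp_eq_zero (hm : m ≤ mΩ) [SigmaFinite (P.trim hm)]
    {g f : Ω → ℝ} (hg : AEStronglyMeasurable[m] g P) (hgf : Integrable (g * f) P)
    (hf : Integrable f P) (hf0 : P[f | m] =ᵐ[P] 0) : ∫ ω, (g * f) ω ∂P = 0 := by
  refine integral_eq_zero_of_condExp_eq_zero hm ?_
  filter_upwards [condExp_mul_of_aestronglyMeasurable_left hg hgf hf, hf0] with ω hω h0
  simp [hω, h0]

theorem covariance_eq_zero_of_condExp_eq_zero [IsProbabilityMeasure P] (hm : m ≤ mΩ)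
    {g f : Ω → ℝ} (hgm : AEStronglyMeasurable[m] g P) (hg : MemLp g 2 P) (hf : MemLp f 2 P)
    (hf0 : P[f | m] =ᵐ[P] 0) : cov[g, f; P] = 0 := by
  rw [covariance_eq_sub hg hf, integral_eq_zero_of_condExp_eq_zero hm hf0, mul_zero, sub_zero]
  exact integral_mul_eq_zero_of_condExp_eq_zero hm hgm (hg.integrable_mul hf)
    (hf.integrable one_le_two) hf0

theorem condExp_div_condExp_self_ae_eq_one {w : Ω → ℝ} (hw : Integrable w P)
    (hdiv : Integrable (w / P[w | m]) P) (hne : ∀ᵐ ω ∂P, (P[w | m]) ω ≠ 0) :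
    P[w / P[w | m] | m] =ᵐ[P] 1 := by
  rw [div_eq_mul_inv] at hdiv ⊢
  have hinv : StronglyMeasurable[m] (P[w | m])⁻¹ := stronglyMeasurable_condExp.inv₀
  filter_upwards [condExp_mul_of_stronglyMeasurable_right hinv hdiv hw, hne] with ω hω h0
  simp [hω, h0]

theorem condExp_mul_sub_condExp_mul_div_condExp_ae_eq_zero {w y : Ω → ℝ} (hw : Integrable w P)
    (hwy : Integrable (w * y) P) (hfit : Integrable (w * (P[w * y | m] / P[w | m])) P)
    (hne : ∀ᵐ ω ∂P, (P[w | m]) ω ≠ 0) :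
    P[w * (y - P[w * y | m] / P[w | m]) | m] =ᵐ[P] 0 := by
  have hfitm : StronglyMeasurable[m] (P[w * y | m] / P[w | m]) :=
    stronglyMeasurable_condExp.div stronglyMeasurable_condExp
  rw [mul_sub]
  filter_upwards [condExp_sub hwy hfit m, condExp_mul_of_stronglyMeasurable_right hfitm hfit hw,
    hne] with ω hsub hpull h0
  simp [hsub, hpull, mul_div_cancel₀ _ h0]

end CondExp

theorem memLp_top_inv_of_le_norm {mΩ : MeasurableSpace Ω} {P : Measure Ω} {f : Ω → ℝ} {ε : ℝ}
    (hfm : AEStronglyMeasurable f P) (hε : 0 < ε) (hf : ∀ᵐ ω ∂P, ε ≤ ‖f ω‖) :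
    MemLp f⁻¹ ⊤ P := by
  refine memLp_top_of_bound hfm.inv₀ ε⁻¹ ?_
  filter_upwards [hf] with ω hω
  rw [Pi.inv_apply, norm_inv]
  exact inv_anti₀ hε hω

/-- The indicator `1_{A=a}` as a real random variable; `fA P m A a` is definitionally its
conditional expectation given `m`. -/
def treated (A : Ω → α) (a : α) : Ω → ℝ :=
  fun ω => if A ω = a then 1 else 0

/-- The uncentred augmented inverse-probability-weighted score with propensities `f` and outcome
model `g`. It is defined for arbitrary `f` and `g`, so that two outcome models can be compared
under the same propensities. -/
noncomputable def aipwScore [Fintype α] (A : Ω → α) (Y : Ω → ℝ) (π f g : α → Ω → ℝ) : Ω → ℝ :=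
  ∑ a, (treated A a * π a / f a * (Y - g a) + π a * g a)

/-- The augmentation term `∑ a, (1_{A=a} / f_a - 1) π_a h_a`. The sum `∑ a, S_a` of the theorem is
the case where `h_a` is the difference of two outcome models. -/
noncomputable def augmentation [Fintype α] (A : Ω → α) (π f h : α → Ω → ℝ) : Ω → ℝ :=
  ∑ a, (treated A a / f a - 1) * π a * h a

section Score

variable {m mΩ : MeasurableSpace Ω} {P : Measure Ω} {A : Ω → α} {Y : Ω → ℝ}

theorem bA_eq_condExp_mul_div (a : α) :
    bA P m A Y a = P[treated A a * Y | m] / fA P m A a := by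
  have htreated : (fun ω => if A ω = a then Y ω else 0) = treated A a * Y := by
    ext ω
    simp [treated]
  ext ω
  rw [bA, htreated, Pi.div_apply]

theorem stronglyMeasurable_bA (a : α) : StronglyMeasurable[m] (bA P m A Y a) := by
  rw [bA_eq_condExp_mul_div]
  exact stronglyMeasurable_condExp.div stronglyMeasurable_condExp

theorem memLp_top_treated [IsFiniteMeasure P] [MeasurableSpace α] [MeasurableSingletonClass α]
    (hA : Measurable A) (a : α) : MemLp (treated A a) ⊤ P := by
  have hmeas : Measurable (treated A a) :=
    Measurable.ite (hA (measurableSet_singleton a)) measurable_const measurable_const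
  refine memLp_top_of_bound hmeas.aestronglyMeasurable 1 (.of_forall fun ω => ?_)
  unfold treated
  split_ifs <;> simp

theorem memLp_top_treated_div [IsFiniteMeasure P] [MeasurableSpace α] [MeasurableSingletonClass α]
    (hA : Measurable A) {e : Ω → ℝ} (he : MemLp e⁻¹ ⊤ P) (a : α) :
    MemLp (treated A a / e) ⊤ P := by
  rw [div_eq_mul_inv]
  exact he.mul (memLp_top_treated hA a)

theorem memLp_top_inv_fA {ε : ℝ} (hε : 0 < ε) {a : α} (hf : ∀ᵐ ω ∂P, ε ≤ fA P m A a ω) :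
    MemLp (fA P m A a)⁻¹ ⊤ P :=
  memLp_top_inv_of_le_norm integrable_condExp.aestronglyMeasurable hε
    (hf.mono fun _ hω => hω.trans (Real.le_norm_self _))

theorem memLp_bA [IsFiniteMeasure P] [MeasurableSpace α] [MeasurableSingletonClass α]
    {p : ENNReal} (hp : 1 ≤ p) (hA : Measurable A) (hY : MemLp Y p P) {a : α}
    (hinv : MemLp (fA P m A a)⁻¹ ⊤ P) : MemLp (bA P m A Y a) p P := by
  rw [bA_eq_condExp_mul_div, div_eq_mul_inv]
  exact hinv.mul ((hY.mul (memLp_top_treated hA a)).condExp hp)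

theorem condExp_treated_div_fA_sub_one_ae_eq_zero [IsFiniteMeasure P] [MeasurableSpace α]
    [MeasurableSingletonClass α] (hm : m ≤ mΩ) (hA : Measurable A) {ε : ℝ} (hε : 0 < ε) {a : α}
    (hf : ∀ᵐ ω ∂P, ε ≤ fA P m A a ω) : P[treated A a / fA P m A a - 1 | m] =ᵐ[P] 0 := by
  have htreated : MemLp (treated A a) ⊤ P := memLp_top_treated hA a
  have hdiv : Integrable (treated A a / fA P m A a) P :=
    (memLp_top_treated_div hA (memLp_top_inv_fA hε hf) a).integrable le_top
  filter_upwards [condExp_sub hdiv (integrable_const 1) m, condExp_div_condExp_self_ae_eq_one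
    (htreated.integrable le_top) hdiv (hf.mono fun _ hω => (hε.trans_le hω).ne')]
    with ω hsub hone
  rw [Pi.sub_apply, condExp_const hm] at hsub
  exact hsub.trans (sub_eq_zero.2 hone)

theorem condExp_treated_mul_sub_bA_ae_eq_zero [IsFiniteMeasure P] [MeasurableSpace α]
    [MeasurableSingletonClass α] (hA : Measurable A) (hY : Integrable Y P) {ε : ℝ} (hε : 0 < ε)
    {a : α} (hf : ∀ᵐ ω ∂P, ε ≤ fA P m A a ω) :
    P[treated A a * (Y - bA P m A Y a) | m] =ᵐ[P] 0 := by
  have htreated : MemLp (treated A a) ⊤ P := memLp_top_treated hA a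
  have hYLp : MemLp Y 1 P := memLp_one_iff_integrable.2 hY
  have hfit : Integrable (treated A a * bA P m A Y a) P := memLp_one_iff_integrable.1
    ((memLp_bA le_rfl hA hYLp (memLp_top_inv_fA hε hf)).mul htreated)
  rw [bA_eq_condExp_mul_div] at hfit ⊢
  exact condExp_mul_sub_condExp_mul_div_condExp_ae_eq_zero (htreated.integrable le_top)
    (memLp_one_iff_integrable.1 (hYLp.mul htreated)) hfit
    (hf.mono fun _ hω => (hε.trans_le hω).ne')

variable [Fintype α] {π f g h : α → Ω → ℝ}

theorem aipwScore_eq_aipwScore_add_augmentation :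
    aipwScore A Y π f g = aipwScore A Y π f h + augmentation A π f (h - g) := by
  simp only [aipwScore, augmentation, ← Finset.sum_add_distrib, Pi.sub_apply, div_eq_mul_inv]
  exact Finset.sum_congr rfl fun a _ => by ring

theorem treated_mul_augmentation (a : α) :
    treated A a * augmentation A π f h = treated A a * augmentation (fun _ => a) π f h := by
  ext ω
  by_cases hω : A ω = a <;> simp [treated, augmentation, hω]

theorem ψ_ae_eq_aipwScore_sub (hf : ∀ a, f a =ᵐ[P] fA P m A a) :
    ψ P m A Y π =ᵐ[P] fun ω => aipwScore A Y π f (bA P m A Y) ω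
      - ∑ a, ∫ ω', π a ω' * bA P m A Y a ω' ∂P := by
  filter_upwards [ae_all_iff.2 hf] with ω hω
  simp [ψ, aipwScore, treated, Finset.sum_sub_distrib, hω]

theorem variance_ψ_eq_variance_aipwScore [IsProbabilityMeasure P] (hf : ∀ a, f a =ᵐ[P] fA P m A a)
    (hscore : AEStronglyMeasurable (aipwScore A Y π f (bA P m A Y)) P) :
    Var[ψ P m A Y π; P] = Var[aipwScore A Y π f (bA P m A Y); P] := by
  rw [variance_congr (ψ_ae_eq_aipwScore_sub hf), variance_sub_const hscore]

theorem aestronglyMeasurable_augmentation_const (a : α)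
    (hπm : ∀ c, AEStronglyMeasurable[m] (π c) P) (hfm : ∀ c, AEStronglyMeasurable[m] (f c) P)
    (hhm : ∀ c, AEStronglyMeasurable[m] (h c) P) :
    AEStronglyMeasurable[m] (augmentation (fun _ => a) π f h) P := by
  have htreated : ∀ c, AEStronglyMeasurable[m] (treated (fun _ : Ω => a) c) P := fun _ =>
    stronglyMeasurable_const.aestronglyMeasurable
  refine Finset.sum_induction _ (AEStronglyMeasurable[m] · P) (fun _ _ => .add)
    stronglyMeasurable_zero.aestronglyMeasurable fun c _ => ?_
  exact ((((htreated c).div₀ (hfm c)).sub stronglyMeasurable_one.aestronglyMeasurable).mul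
    (hπm c)).mul (hhm c)

section Moments

variable [MeasurableSpace α] [MeasurableSingletonClass α]

theorem memLp_aipwScore [IsFiniteMeasure P] {p : ENNReal} (hA : Measurable A)
    (hπ : ∀ a, MemLp (π a) ⊤ P) (hinv : ∀ a, MemLp (f a)⁻¹ ⊤ P) (hY : MemLp Y p P)
    (hg : ∀ a, MemLp (g a) p P) : MemLp (aipwScore A Y π f g) p P := by
  refine memLp_finsetSum' _ fun a _ => .add ?_ ((hg a).mul (hπ a))
  rw [div_eq_mul_inv]
  exact (hY.sub (hg a)).mul ((hinv a).mul ((hπ a).mul (memLp_top_treated hA a) (r := ⊤)) (r := ⊤))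

theorem memLp_augmentation [IsFiniteMeasure P] {p : ENNReal} (hA : Measurable A)
    (hπ : ∀ a, MemLp (π a) ⊤ P) (hinv : ∀ a, MemLp (f a)⁻¹ ⊤ P)
    (hh : ∀ a, MemLp (h a) p P) : MemLp (augmentation A π f h) p P := by
  refine memLp_finsetSum' _ fun a _ => (hh a).mul ((hπ a).mul ?_ (p := ⊤) (r := ⊤))
  exact (memLp_top_treated_div hA (hinv a) a).sub (memLp_const 1)

theorem condExp_augmentation_ae_eq_zero [IsFiniteMeasure P] (hm : m ≤ mΩ) (hA : Measurable A)
    (hπm : ∀ a, AEStronglyMeasurable[m] (π a) P) (hπ : ∀ a, MemLp (π a) ⊤ P) {ε : ℝ} (hε : 0 < ε)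
    (hf : ∀ a, ∀ᵐ ω ∂P, ε ≤ fA P m A a ω) (hhm : ∀ a, AEStronglyMeasurable[m] (h a) P)
    (hh : ∀ a, Integrable (h a) P) : P[augmentation A π (fA P m A) h | m] =ᵐ[P] 0 := by
  have hR : ∀ a, MemLp (treated A a / fA P m A a - 1) ⊤ P := fun a =>
    (memLp_top_treated_div hA (memLp_top_inv_fA hε (hf a)) a).sub (memLp_const 1)
  have hsummand : ∀ a, Integrable ((treated A a / fA P m A a - 1) * (π a * h a)) P := fun a =>
    memLp_one_iff_integrable.1
      (((memLp_one_iff_integrable.2 (hh a)).mul (hπ a) (r := 1)).mul (hR a))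
  simp only [augmentation, mul_assoc]
  filter_upwards [condExp_finsetSum (s := Finset.univ) (fun a _ => hsummand a) m,
    ae_all_iff.2 fun a => condExp_mul_of_aestronglyMeasurable_right (m := m)
      ((hπm a).mul (hhm a)) (hsummand a) ((hR a).integrable le_top),
    ae_all_iff.2 fun a => condExp_treated_div_fA_sub_one_ae_eq_zero hm hA hε (hf a)]
    with ω hsum hpull hzero
  simp [hsum, Finset.sum_apply, hpull, hzero]

end Moments

section Variance

variable [MeasurableSpace α] [MeasurableSingletonClass α] [IsProbabilityMeasure P]

theorem covariance_mul_treated_mul_sub_bA_augmentation_eq_zero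
    (hm : m ≤ mΩ) (hA : Measurable A) (hY : MemLp Y 2 P)
    (hπm : ∀ a, AEStronglyMeasurable[m] (π a) P) (hπ : ∀ a, MemLp (π a) ⊤ P)
    {ε : ℝ} (hε : 0 < ε) (hf : ∀ a, ∀ᵐ ω ∂P, ε ≤ fA P m A a ω)
    (hhm : ∀ a, AEStronglyMeasurable[m] (h a) P) (hh : ∀ a, MemLp (h a) 2 P) {q : Ω → ℝ}
    (hqm : AEStronglyMeasurable[m] q P) (hq : MemLp q ⊤ P) (a : α) :
    cov[q * (treated A a * (Y - bA P m A Y a)), augmentation A π (fA P m A) h; P] = 0 := by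
  have hinv : ∀ a, MemLp (fA P m A a)⁻¹ ⊤ P := fun a => memLp_top_inv_fA hε (hf a)
  have hresid : MemLp (treated A a * (Y - bA P m A Y a)) 2 P :=
    (hY.sub (memLp_bA one_le_two hA hY (hinv a))).mul (memLp_top_treated hA a)
  have haug : MemLp (augmentation A π (fA P m A) h) 2 P := memLp_augmentation hA hπ hinv hh
  have haug_mean : ∫ ω, augmentation A π (fA P m A) h ω ∂P = 0 :=
    integral_eq_zero_of_condExp_eq_zero hm <|
      condExp_augmentation_ae_eq_zero hm hA hπm hπ hε hf hhm fun a => (hh a).integrable one_le_two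
  have hfreeze : q * (treated A a * (Y - bA P m A Y a)) * augmentation A π (fA P m A) h =
      q * augmentation (fun _ => a) π (fA P m A) h * (treated A a * (Y - bA P m A Y a)) := by
    linear_combination q * (Y - bA P m A Y a) * treated_mul_augmentation (A := A) a
  have hfrozen : MemLp (q * augmentation (fun _ => a) π (fA P m A) h) 2 P :=
    (memLp_augmentation measurable_const hπ hinv hh).mul hq
  rw [covariance_eq_sub (hresid.mul hq) haug, haug_mean, mul_zero, sub_zero, hfreeze]
  exact integral_mul_eq_zero_of_condExp_eq_zero hm
    (hqm.mul (aestronglyMeasurable_augmentation_const a hπm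
      (fun _ => stronglyMeasurable_condExp.aestronglyMeasurable) hhm))
    (hfrozen.integrable_mul hresid) (hresid.integrable one_le_two)
    (condExp_treated_mul_sub_bA_ae_eq_zero hA (hY.integrable one_le_two) hε (hf a))

theorem covariance_aipwScore_augmentation_eq_zero
    (hm : m ≤ mΩ) (hA : Measurable A) (hY : MemLp Y 2 P)
    (hπm : ∀ a, AEStronglyMeasurable[m] (π a) P) (hπ : ∀ a, MemLp (π a) ⊤ P)
    {ε : ℝ} (hε : 0 < ε) (hf : ∀ a, ∀ᵐ ω ∂P, ε ≤ fA P m A a ω)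
    (hhm : ∀ a, AEStronglyMeasurable[m] (h a) P) (hh : ∀ a, MemLp (h a) 2 P) :
    cov[aipwScore A Y π (fA P m A) (bA P m A Y), augmentation A π (fA P m A) h; P] = 0 := by
  have hinv : ∀ a, MemLp (fA P m A a)⁻¹ ⊤ P := fun a => memLp_top_inv_fA hε (hf a)
  have hb : ∀ a, MemLp (bA P m A Y a) 2 P := fun a => memLp_bA one_le_two hA hY (hinv a)
  have haug : MemLp (augmentation A π (fA P m A) h) 2 P := memLp_augmentation hA hπ hinv hh
  have hweight : ∀ a, MemLp (π a * (fA P m A a)⁻¹) ⊤ P := fun a => (hinv a).mul (hπ a)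
  have hweighted : ∀ a,
      MemLp (π a * (fA P m A a)⁻¹ * (treated A a * (Y - bA P m A Y a))) 2 P := fun a =>
    ((hY.sub (hb a)).mul (memLp_top_treated hA a) (r := 2)).mul (hweight a)
  have hfit : ∀ a, MemLp (π a * bA P m A Y a) 2 P := fun a => (hb a).mul (hπ a)
  have hscore : aipwScore A Y π (fA P m A) (bA P m A Y) =
      ∑ a, (π a * (fA P m A a)⁻¹ * (treated A a * (Y - bA P m A Y a)) + π a * bA P m A Y a) := by
    simp only [aipwScore, div_eq_mul_inv]
    exact Finset.sum_congr rfl fun a _ => by ring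
  rw [hscore, covariance_sum_left (fun a => (hweighted a).add (hfit a)) haug]
  refine Finset.sum_eq_zero fun a _ => ?_
  have hweightm : AEStronglyMeasurable[m] (π a * (fA P m A a)⁻¹) P :=
    (hπm a).mul stronglyMeasurable_condExp.inv₀.aestronglyMeasurable
  rw [covariance_add_left (hweighted a) (hfit a) haug,
    covariance_mul_treated_mul_sub_bA_augmentation_eq_zero hm hA hY hπm hπ hε hf hhm hh
      hweightm (hweight a),
    covariance_eq_zero_of_condExp_eq_zero hm
      ((hπm a).mul (stronglyMeasurable_bA a).aestronglyMeasurable) (hfit a) haug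
      (condExp_augmentation_ae_eq_zero hm hA hπm hπ hε hf hhm fun a =>
        (hh a).integrable one_le_two),
    add_zero]

theorem variance_aipwScore
    (hm : m ≤ mΩ) (hA : Measurable A) (hY : MemLp Y 2 P)
    (hπm : ∀ a, AEStronglyMeasurable[m] (π a) P) (hπ : ∀ a, MemLp (π a) ⊤ P)
    {ε : ℝ} (hε : 0 < ε) (hf : ∀ a, ∀ᵐ ω ∂P, ε ≤ fA P m A a ω)
    (hgm : ∀ a, AEStronglyMeasurable[m] (g a) P) (hg : ∀ a, MemLp (g a) 2 P) :
    Var[aipwScore A Y π (fA P m A) g; P] = Var[aipwScore A Y π (fA P m A) (bA P m A Y); P] +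
      Var[augmentation A π (fA P m A) (bA P m A Y - g); P] := by
  have hinv : ∀ a, MemLp (fA P m A a)⁻¹ ⊤ P := fun a => memLp_top_inv_fA hε (hf a)
  have hb : ∀ a, MemLp (bA P m A Y a) 2 P := fun a => memLp_bA one_le_two hA hY (hinv a)
  have hdiff : ∀ a, MemLp ((bA P m A Y - g) a) 2 P := fun a => (hb a).sub (hg a)
  have hdiffm : ∀ a, AEStronglyMeasurable[m] ((bA P m A Y - g) a) P := fun a =>
    (stronglyMeasurable_bA a).aestronglyMeasurable.sub (hgm a)
  rw [aipwScore_eq_aipwScore_add_augmentation (h := bA P m A Y),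
    variance_add (memLp_aipwScore hA hπ hinv hY hb) (memLp_augmentation hA hπ hinv hdiff),
    covariance_aipwScore_augmentation_eq_zero hm hA hY hπm hπ hε hf hdiffm hdiff]
  ring

end Variance

end Score

theorem stmt17_general {Ω : Type*} {α : Type*} [Fintype α] [DecidableEq α]
    [MeasurableSpace α] [MeasurableSingletonClass α] {mB mG mΩ : MeasurableSpace Ω}
    {P : Measure Ω} [IsProbabilityMeasure P] {A : Ω → α} (hA : Measurable A)
    {Y : Ω → ℝ} (hY : MemLp Y 2 P) {π : α → Ω → ℝ}
    (hπm : ∀ a, AEStronglyMeasurable[mG] (π a) P) (hπ : ∀ a, MemLp (π a) ⊤ P)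
    (hBG : mB ≤ mG) (hGΩ : mG ≤ mΩ) {ε : ℝ} (hε : 0 < ε)
    (hfG : ∀ a, ∀ᵐ ω ∂P, ε ≤ fA P mG A a ω) (hff : ∀ a, fA P mG A a =ᵐ[P] fA P mB A a) :
    Var[ψ P mB A Y π; P] - Var[ψ P mG A Y π; P] =
      Var[fun ω => ∑ a, ((if A ω = a then (1 : ℝ) else 0) / fA P mG A a ω - 1) * π a ω *
        (bA P mG A Y a ω - bA P mB A Y a ω); P] := by
  have hinvG : ∀ a, MemLp (fA P mG A a)⁻¹ ⊤ P := fun a => memLp_top_inv_fA hε (hfG a)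
  have hbG : ∀ a, MemLp (bA P mG A Y a) 2 P := fun a => memLp_bA one_le_two hA hY (hinvG a)
  have hbB : ∀ a, MemLp (bA P mB A Y a) 2 P := fun a => memLp_bA one_le_two hA hY <|
    memLp_top_inv_fA hε <| by filter_upwards [hfG a, hff a] with ω hω heq using heq ▸ hω
  have hbBm : ∀ a, AEStronglyMeasurable[mG] (bA P mB A Y a) P := fun a =>
    ((stronglyMeasurable_bA a).mono hBG).aestronglyMeasurable
  have hS : (fun ω => ∑ a, ((if A ω = a then (1 : ℝ) else 0) / fA P mG A a ω - 1) * π a ω *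
      (bA P mG A Y a ω - bA P mB A Y a ω)) =
      augmentation A π (fA P mG A) (bA P mG A Y - bA P mB A Y) := by
    ext ω
    simp [augmentation, treated]
  rw [variance_ψ_eq_variance_aipwScore hff
      (memLp_aipwScore hA hπ hinvG hY hbB).aestronglyMeasurable,
    variance_ψ_eq_variance_aipwScore (fun _ => .rfl)
      (memLp_aipwScore hA hπ hinvG hY hbG).aestronglyMeasurable,
    variance_aipwScore hGΩ hA hY hπm hπ hε hfG hbBm hbB, add_sub_cancel_left, hS]

/-- Lemma 1 (supplementation with precision variables, statement 17). -/
theorem stmt17 {Ω : Type*} {α : Type*} [Fintype α] [DecidableEq α] [Nonempty α]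
    [mΩ : MeasurableSpace Ω] (P : Measure Ω) [IsProbabilityMeasure P]
    [MeasurableSpace α] [MeasurableSingletonClass α]
    (A : Ω → α) (hA : Measurable A)
    (Y : Ω → ℝ) (hYm : Measurable Y) (C : ℝ) (hYb : ∀ ω, |Y ω| ≤ C)
    (π : α → Ω → ℝ) (hπ01 : ∀ a ω, π a ω ∈ Set.Icc (0 : ℝ) 1)
    (hπsum : ∀ᵐ ω ∂P, ∑ a : α, π a ω = 1)
    (mB mG : MeasurableSpace Ω) (hBG : mB ≤ mG) (hGΩ : mG ≤ mΩ)
    (hπB : ∀ a, Measurable[mB] (π a))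
    (ε : ℝ) (hε : 0 < ε)
    (hfG : ∀ a, ∀ᵐ ω ∂P, ε ≤ fA (mΩ := mΩ) P mG A a ω)
    (hff : ∀ a, fA (mΩ := mΩ) P mG A a =ᵐ[P] fA (mΩ := mΩ) P mB A a) :
    variance (ψ (mΩ := mΩ) P mB A Y π) P - variance (ψ (mΩ := mΩ) P mG A Y π) P
        = variance (fun ω => ∑ a : α,
            ((if A ω = a then (1 : ℝ) else 0) / fA (mΩ := mΩ) P mG A a ω - 1)
              * π a ω
              * (bA (mΩ := mΩ) P mG A Y a ω - bA (mΩ := mΩ) P mB A Y a ω)) P ∧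
    0 ≤ variance (fun ω => ∑ a : α,
            ((if A ω = a then (1 : ℝ) else 0) / fA (mΩ := mΩ) P mG A a ω - 1)
              * π a ω
              * (bA (mΩ := mΩ) P mG A Y a ω - bA (mΩ := mΩ) P mB A Y a ω)) P := by
  have hπm : ∀ a, Measurable[mΩ] (π a) := fun a => (hπB a).mono (hBG.trans hGΩ) le_rfl
  exact ⟨stmt17_general hA (.of_bound hYm.aestronglyMeasurable C (.of_forall hYb))
    (fun a => ((hπB a).mono hBG le_rfl).aestronglyMeasurable)
    (fun a => memLp_of_bounded (.of_forall (hπ01 a)) (hπm a).aestronglyMeasurable ⊤)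
    hBG hGΩ hε hfG hff, variance_nonneg _ _⟩

end CausalVar
end
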